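/- Let X be a measurable space, P a Markov (probability) kernel on X, V : X → ℝ measurable with V(x) ≥ 1 for all x, K ⊆ X measurable, λ ∈ (0,1), b ∈ [0,∞), and suppose ∫ V(y) P(x,dy) ≤ λ·V(x) + b·1_K(x) for all x ∈ X. Let κ ≥ 0 and define Ṽ(x) = (1−√λ)^{−1}·max(1,κ)·√(V(x)). Then for all x ∈ X, ∫ Ṽ(y) P(x,dy) ≤ Ṽ(x) − max(1,κ)·√(V(x)) + (1−√λ)^{−1}·max(1,κ)·√b·1_K(x). -/

import Mathlib

open MeasureTheory ProbabilityTheory Filter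
open scoped ENNReal NNReal Topology

noncomputable section

/-! Jensen's inequality for `t ↦ t ^ p` and subadditivity of this power turn the geometric drift
condition `P V ≤ l V + b 1_K` into `P V ^ p ≤ l ^ p V ^ p + b ^ p 1_K`. Scaling by
`C = c / (1 - l ^ p)` gives (V3), because then `C l ^ p = C - c`. -/

/-- The geometric drift condition `P V ≤ l V + b 1_K` for `V ≥ 0`, that is (V4) of Meyn–Tweedie
with `l = 1 - β`. The integral is taken in `ℝ≥0∞`, so the inequality forces `V` to be integrable;
`ENNReal.ofReal` truncates negative values to `0`. -/
def GeometricDrift {X : Type*} [MeasurableSpace X]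
    (P : Kernel X X) (V : X → ℝ) (K : Set X) (l b : ℝ) : Prop :=
  ∀ x, ∫⁻ y, ENNReal.ofReal (V y) ∂(P x)
    ≤ ENNReal.ofReal (l * V x + b * K.indicator (fun _ => 1) x)

/-- The drift condition (V3) of Meyn–Tweedie, `P V ≤ V - f + b 1_K`, with the integral of `V`
taken in `ℝ≥0∞` as in `GeometricDrift`. -/
def DriftV3 {X : Type*} [MeasurableSpace X]
    (P : Kernel X X) (V f : X → ℝ) (K : Set X) (b : ℝ) : Prop :=
  ∀ x, ∫⁻ y, ENNReal.ofReal (V y) ∂(P x)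
    ≤ ENNReal.ofReal (V x - f x + b * K.indicator (fun _ => 1) x)

section Jensen

variable {α : Type*} [MeasurableSpace α] {μ : Measure α} {p : ℝ}

lemma lintegral_rpow_le_rpow_lintegral_mul_measure_univ {f : α → ℝ≥0∞} (hf : AEMeasurable f μ)
    (hp0 : 0 ≤ p) (hp1 : p ≤ 1) :
    ∫⁻ a, f a ^ p ∂μ ≤ (∫⁻ a, f a ∂μ) ^ p * μ Set.univ ^ (1 - p) := by
  simpa using ENNReal.lintegral_mul_norm_pow_le hf (aemeasurable_const (b := (1 : ℝ≥0∞)))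
    hp0 (sub_nonneg.mpr hp1) (add_sub_cancel p 1)

lemma lintegral_rpow_le_rpow_lintegral {f : α → ℝ≥0∞} (hμ : μ Set.univ ≤ 1)
    (hf : AEMeasurable f μ) (hp0 : 0 ≤ p) (hp1 : p ≤ 1) :
    ∫⁻ a, f a ^ p ∂μ ≤ (∫⁻ a, f a ∂μ) ^ p :=
  (lintegral_rpow_le_rpow_lintegral_mul_measure_univ hf hp0 hp1).trans
    (mul_le_of_le_one_right' (ENNReal.rpow_le_one hμ (sub_nonneg.mpr hp1)))

lemma lintegral_ofReal_rpow_le {f : α → ℝ} {a : ℝ} (hμ : μ Set.univ ≤ 1)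
    (hf : AEMeasurable f μ) (hf0 : ∀ x, 0 ≤ f x) (ha : 0 ≤ a) (hp0 : 0 ≤ p) (hp1 : p ≤ 1)
    (h : ∫⁻ x, ENNReal.ofReal (f x) ∂μ ≤ ENNReal.ofReal a) :
    ∫⁻ x, ENNReal.ofReal (f x ^ p) ∂μ ≤ ENNReal.ofReal (a ^ p) := by
  simp only [← ENNReal.ofReal_rpow_of_nonneg (hf0 _) hp0, ← ENNReal.ofReal_rpow_of_nonneg ha hp0]
  exact (lintegral_rpow_le_rpow_lintegral hμ hf.ennreal_ofReal hp0 hp1).trans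
    (ENNReal.rpow_le_rpow h hp0)

end Jensen

lemma indicator_one_rpow {α : Type*} (s : Set α) (a : α) {p : ℝ} (hp : p ≠ 0) :
    s.indicator (fun _ => (1 : ℝ)) a ^ p = s.indicator (fun _ => 1) a := by
  by_cases ha : a ∈ s <;> simp [ha, hp]

namespace GeometricDrift

variable {X : Type*} [MeasurableSpace X] {P : Kernel X X} {V : X → ℝ} {K : Set X} {l b : ℝ}

lemma rpow (h : GeometricDrift P V K l b) (hP : ∀ x, P x Set.univ ≤ 1) (hV : Measurable V)
    (hV0 : ∀ x, 0 ≤ V x) (hl : 0 ≤ l) (hb : 0 ≤ b) {p : ℝ} (hp0 : 0 < p) (hp1 : p ≤ 1) :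
    GeometricDrift P (fun x => V x ^ p) K (l ^ p) (b ^ p) := by
  intro x
  set i : ℝ := K.indicator (fun _ => 1) x with hi
  have hi0 : 0 ≤ i := Set.indicator_nonneg (fun _ _ => zero_le_one) x
  have hlV : 0 ≤ l * V x := mul_nonneg hl (hV0 x)
  have hbi : 0 ≤ b * i := mul_nonneg hb hi0
  calc ∫⁻ y, ENNReal.ofReal (V y ^ p) ∂(P x)
      ≤ ENNReal.ofReal ((l * V x + b * i) ^ p) :=
        lintegral_ofReal_rpow_le (hP x) hV.aemeasurable hV0 (add_nonneg hlV hbi) hp0.le hp1 (h x)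
    _ ≤ ENNReal.ofReal ((l * V x) ^ p + (b * i) ^ p) :=
        ENNReal.ofReal_le_ofReal (Real.rpow_add_le_add_rpow hlV hbi hp0.le hp1)
    _ = ENNReal.ofReal (l ^ p * V x ^ p + b ^ p * i) := by
        rw [Real.mul_rpow hl (hV0 x), Real.mul_rpow hb hi0, hi, indicator_one_rpow K x hp0.ne']

lemma driftV3_const_mul (h : GeometricDrift P V K l b) (hl : l < 1) {c : ℝ} (hc : 0 ≤ c) :
    DriftV3 P (fun x => (1 - l)⁻¹ * c * V x) (fun x => c * V x) K ((1 - l)⁻¹ * c * b) := by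
  intro x
  have hl' : 0 < 1 - l := sub_pos.mpr hl
  have hC : 0 ≤ (1 - l)⁻¹ * c := by positivity
  calc ∫⁻ y, ENNReal.ofReal ((1 - l)⁻¹ * c * V y) ∂(P x)
      = ENNReal.ofReal ((1 - l)⁻¹ * c) * ∫⁻ y, ENNReal.ofReal (V y) ∂(P x) := by
        simp only [ENNReal.ofReal_mul hC]
        exact lintegral_const_mul' _ _ ENNReal.ofReal_ne_top
    _ ≤ ENNReal.ofReal ((1 - l)⁻¹ * c * (l * V x + b * K.indicator (fun _ => 1) x)) := by
        rw [ENNReal.ofReal_mul hC]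
        gcongr
        exact h x
    _ = ENNReal.ofReal ((1 - l)⁻¹ * c * V x - c * V x
          + (1 - l)⁻¹ * c * b * K.indicator (fun _ => 1) x) := by
        congr 1
        field_simp
        ring

end GeometricDrift

theorem drift_V3_general {X : Type*} [MeasurableSpace X] {P : Kernel X X}
    (hP : ∀ x, P x Set.univ ≤ 1) {V : X → ℝ} (hV : Measurable V) (hV0 : ∀ x, 0 ≤ V x)
    {K : Set X} {l b : ℝ} (hl0 : 0 ≤ l) (hl1 : l < 1) (hb : 0 ≤ b)
    (hdrift : GeometricDrift P V K l b) {p : ℝ} (hp0 : 0 < p) (hp1 : p ≤ 1)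
    {c : ℝ} (hc : 0 ≤ c) :
    DriftV3 P (fun x => (1 - l ^ p)⁻¹ * c * V x ^ p) (fun x => c * V x ^ p) K
      ((1 - l ^ p)⁻¹ * c * b ^ p) :=
  (hdrift.rpow hP hV hV0 hl0 hb hp0 hp1).driftV3_const_mul (Real.rpow_lt_one hl0 hl1 hp0) hc

/-- The function `Ṽ = (1-√λ)⁻¹ max(1,κ) √V` satisfies the Meyn–Tweedie condition (V3):
`∫ Ṽ dP(x,·) ≤ Ṽ(x) − max(1,κ)·√V(x) + (1−√λ)⁻¹ max(1,κ) √b · 1_K(x)`. -/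
theorem drift_V3 {X : Type*} [MeasurableSpace X]
    (P : Kernel X X) [IsMarkovKernel P]
    (V : X → ℝ) (hVmeas : Measurable V) (hV1 : ∀ x, 1 ≤ V x)
    (K : Set X) (hK : MeasurableSet K)
    (l b : ℝ) (hl0 : 0 < l) (hl1 : l < 1) (hb : 0 ≤ b)
    (hdrift : ∀ x, ∫⁻ y, ENNReal.ofReal (V y) ∂(P x)
      ≤ ENNReal.ofReal (l * V x + b * K.indicator (fun _ => 1) x))
    (κ : ℝ) (hκ : 0 ≤ κ)
    (tV : X → ℝ) (htV : ∀ x, tV x = (1 - Real.sqrt l)⁻¹ * max 1 κ * Real.sqrt (V x)) :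
    ∀ x : X, ∫⁻ y, ENNReal.ofReal (tV y) ∂(P x)
      ≤ ENNReal.ofReal (tV x - max 1 κ * Real.sqrt (V x)
          + (1 - Real.sqrt l)⁻¹ * max 1 κ * Real.sqrt b * K.indicator (fun _ => 1) x) := by
  simp only [htV, Real.sqrt_eq_rpow]
  exact drift_V3_general (fun _ => prob_le_one) hVmeas (fun x => zero_le_one.trans (hV1 x))
    hl0.le hl1 hb hdrift one_half_pos one_half_lt_one.le (zero_le_one.trans (le_max_left 1 κ))

end
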